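/- arXiv:2111.06299 — 3 statements merged into one kernel-verified Lean document; each statement's English description precedes it below -/
import Mathlib

section
/- Let V be a finite set, let s ≠ t be elements of V, let ℓ ≥ 1, and let I_0 = {s}, I_ℓ = {t}, and I_1, …, I_{ℓ−1} be subsets of V. Let μ be a probability distribution on assignments V → {0,1}. For 0 ≤ i ≤ ℓ−1 and assignments f_i : I_i → {0,1}, f_{i+1} : I_{i+1} → {0,1}, define the capacity w(f_i, f_{i+1}) = Pr_{f ∼ μ}[ f|_{I_i} = f_i ∧ f|_{I_{i+1}} = f_{i+1} ] and the flow g(f_i, f_{i+1}) = Pr_{f ∼ μ}[ f(s) = 0 ∧ f(t) = 1 ∧ f|_{I_i} = f_i ∧ f|_{I_{i+1}} = f_{i+1} ]. Then: (i) 0 ≤ g(f_i, f_{i+1}) ≤ w(f_i, f_{i+1}) for all edges; (ii) flow conservation holds: for every 1 ≤ i ≤ ℓ−1 and every f_i : I_i → {0,1}, Σ_{f_{i−1}} g(f_{i−1}, f_i) = Σ_{f_{i+1}} g(f_i, f_{i+1}); (iii) the flow value out of the source state (s ↦ 0) is Σ_{f_1} g(s↦0, f_1) = Pr_{f ∼ μ}[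 f(s) = 0 ∧ f(t) = 1 ], no flow leaves the state (s ↦ 1), i.e. Σ_{f_1} g(s↦1, f_1) = 0, and no flow enters the state (t ↦ 0), i.e. Σ_{f_{ℓ−1}} g(f_{ℓ−1}, t↦0) = 0. -/
/-!
STATEMENT 13: The Markov flow graph carries a flow: the flow `g` is dominated by the
capacities `w`, satisfies flow conservation at the internal layers, has value
Pr[f(s)=0 ∧ f(t)=1] out of the source state (s ↦ 0), and no flow leaves (s ↦ 1) or
enters (t ↦ 0).
-/

variable {V : Type*} [Fintype V] [DecidableEq V]

/-- The capacity of the edge from the assignment `a` of `I i` to the assignment `b`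
of `I (i+1)`: the probability under `μ` that `f|_{I i} = a` and `f|_{I (i+1)} = b`. -/
noncomputable def capW (I : ℕ → Finset V) (μ : (V → Bool) → ℝ) (i : ℕ)
    (a : ↥(I i) → Bool) (b : ↥(I (i + 1)) → Bool) : ℝ :=
  ∑ f : V → Bool,
    if (fun x : ↥(I i) => f x.1) = a ∧ (fun x : ↥(I (i + 1)) => f x.1) = b then μ f
    else 0

/-- The flow on the edge from the assignment `a` of `I i` to the assignment `b` of
`I (i+1)`: the probability under `μ` that `f(s) = 0`, `f(t) = 1`, `f|_{I i} = a` and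
`f|_{I (i+1)} = b`. -/
noncomputable def flowG (s t : V) (I : ℕ → Finset V) (μ : (V → Bool) → ℝ) (i : ℕ)
    (a : ↥(I i) → Bool) (b : ↥(I (i + 1)) → Bool) : ℝ :=
  ∑ f : V → Bool,
    if f s = false ∧ f t = true ∧
        (fun x : ↥(I i) => f x.1) = a ∧ (fun x : ↥(I (i + 1)) => f x.1) = b then μ f
    else 0

/-!
The flow on an edge is the mass of those `f` with `f s = 0`, `f t = 1` that pass through both
endpoints. Every `f` restricts to exactly one assignment of a layer, so summing over one endpoint of
an edge drops the condition on it. Inflow and outflow at an assignment `a` of `I i` are therefore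
both the mass of `f s = 0 ∧ f t = 1 ∧ f|_{I i} = a`; at the two end layers, the condition on `f s`
or `f t` decides whether `f|_{I i} = a` can hold.
-/

theorem sum_sum_filter_and_eq {α β M : Type*} [Fintype α] [Fintype β] [DecidableEq β]
    [AddCommMonoid M] (p : α → Prop) [DecidablePred p] (r : α → β) (m : α → M) :
    ∑ b, ∑ x with p x ∧ r x = b, m x = ∑ x with p x, m x := by
  simp_rw [← Finset.filter_filter]
  exact Finset.sum_fiberwise _ r m

section Flow

variable (s t : V) (I : ℕ → Finset V) (μ : (V → Bool) → ℝ) (i : ℕ)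

theorem capW_eq_sum_filter (a : ↥(I i) → Bool) (b : ↥(I (i + 1)) → Bool) :
    capW I μ i a b
      = ∑ f : V → Bool with
          (fun x : ↥(I i) => f x) = a ∧ (fun x : ↥(I (i + 1)) => f x) = b, μ f :=
  (Finset.sum_filter _ _).symm

theorem flowG_eq_sum_filter (a : ↥(I i) → Bool) (b : ↥(I (i + 1)) → Bool) :
    flowG s t I μ i a b
      = ∑ f : V → Bool with f s = false ∧ f t = true ∧
          (fun x : ↥(I i) => f x) = a ∧ (fun x : ↥(I (i + 1)) => f x) = b, μ f :=
  (Finset.sum_filter _ _).symm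

theorem sum_flowG_left (b : ↥(I (i + 1)) → Bool) :
    ∑ a, flowG s t I μ i a b
      = ∑ f : V → Bool with f s = false ∧ f t = true ∧
          (fun x : ↥(I (i + 1)) => f x) = b, μ f := by
  rw [← sum_sum_filter_and_eq _ fun (f : V → Bool) (x : ↥(I i)) => f x]
  simp only [flowG_eq_sum_filter, and_comm, and_left_comm]

theorem sum_flowG_right (a : ↥(I i) → Bool) :
    ∑ b, flowG s t I μ i a b
      = ∑ f : V → Bool with f s = false ∧ f t = true ∧ (fun x : ↥(I i) => f x) = a, μ f := by
  rw [← sum_sum_filter_and_eq _ fun (f : V → Bool) (x : ↥(I (i + 1))) => f x]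
  simp only [flowG_eq_sum_filter, and_assoc]

theorem sum_flowG_left_eq_sum_flowG_right (a : ↥(I (i + 1)) → Bool) :
    ∑ h, flowG s t I μ i h a = ∑ h, flowG s t I μ (i + 1) a h :=
  (sum_flowG_left s t I μ i a).trans (sum_flowG_right s t I μ (i + 1) a).symm

variable {I i}

theorem sum_flowG_right_of_subset_singleton (hI : I i ⊆ {s}) :
    ∑ b, flowG s t I μ i (fun _ => false) b
      = ∑ f : V → Bool with f s = false ∧ f t = true, μ f := by
  have restrict_eq (f : V → Bool) (hf : f s = false) : (fun x : ↥(I i) => f x) = fun _ => false :=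
    funext fun x => (congrArg f (Finset.mem_singleton.mp (hI x.2))).trans hf
  rw [sum_flowG_right]
  refine Finset.sum_congr (Finset.filter_congr fun f _ => ?_) fun _ _ => rfl
  exact ⟨fun ⟨hfs, hft, _⟩ => ⟨hfs, hft⟩, fun ⟨hfs, hft⟩ => ⟨hfs, hft, restrict_eq f hfs⟩⟩

theorem sum_flowG_right_eq_zero_of_eq_true (hs : s ∈ I i) {a : ↥(I i) → Bool}
    (ha : a ⟨s, hs⟩ = true) : ∑ b, flowG s t I μ i a b = 0 := by
  rw [sum_flowG_right, Finset.filter_false_of_mem, Finset.sum_empty]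
  rintro f - ⟨hfs, -, rfl⟩
  exact Bool.false_ne_true (hfs.symm.trans ha)

theorem sum_flowG_left_eq_zero_of_eq_false (ht : t ∈ I (i + 1)) {b : ↥(I (i + 1)) → Bool}
    (hb : b ⟨t, ht⟩ = false) : ∑ a, flowG s t I μ i a b = 0 := by
  rw [sum_flowG_left, Finset.filter_false_of_mem, Finset.sum_empty]
  rintro f - ⟨-, hft, rfl⟩
  exact Bool.false_ne_true (hb.symm.trans hft)

variable {μ}

theorem flowG_nonneg (hμ : ∀ f, 0 ≤ μ f) (a : ↥(I i) → Bool) (b : ↥(I (i + 1)) → Bool) :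
    0 ≤ flowG s t I μ i a b := by
  rw [flowG_eq_sum_filter]
  exact Finset.sum_nonneg fun f _ => hμ f

theorem flowG_le_capW (hμ : ∀ f, 0 ≤ μ f) (a : ↥(I i) → Bool) (b : ↥(I (i + 1)) → Bool) :
    flowG s t I μ i a b ≤ capW I μ i a b := by
  rw [flowG_eq_sum_filter, capW_eq_sum_filter]
  exact Finset.sum_le_sum_of_subset_of_nonneg
    (Finset.monotone_filter_right _ fun _ _ h => h.2.2) fun f _ _ => hμ f

end Flow

theorem stmt13 (s t : V) (hst : s ≠ t) (ℓ : ℕ) (hℓ : 1 ≤ ℓ)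
    (I : ℕ → Finset V) (hI0 : I 0 = {s}) (hIl : I ℓ = {t})
    (μ : (V → Bool) → ℝ) (hμ : ∀ f, 0 ≤ μ f) (hμ1 : ∑ f : V → Bool, μ f = 1) :
    -- (i) 0 ≤ g ≤ w on all edges
    (∀ i < ℓ, ∀ (a : ↥(I i) → Bool) (b : ↥(I (i + 1)) → Bool),
      0 ≤ flowG s t I μ i a b ∧ flowG s t I μ i a b ≤ capW I μ i a b)
    -- (ii) flow conservation at the layers 1, …, ℓ−1
    ∧ (∀ j : ℕ, j + 2 ≤ ℓ → ∀ a : ↥(I (j + 1)) → Bool,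
        ∑ h : ↥(I j) → Bool, flowG s t I μ j h a
          = ∑ h : ↥(I (j + 2)) → Bool, flowG s t I μ (j + 1) a h)
    -- (iii) the flow value out of the source state (s ↦ 0) is Pr[f(s)=0 ∧ f(t)=1],
    ∧ (∑ b : ↥(I 1) → Bool, flowG s t I μ 0 (fun _ => false) b
        = ∑ f : V → Bool, if f s = false ∧ f t = true then μ f else 0)
    -- no flow leaves the state (s ↦ 1),
    ∧ (∑ b : ↥(I 1) → Bool, flowG s t I μ 0 (fun _ => true) b = 0)
    -- and no flow enters the state (t ↦ 0)
    ∧ (∀ j : ℕ, j + 1 = ℓ →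
        ∑ a : ↥(I j) → Bool, flowG s t I μ j a (fun _ => false) = 0) := by
  refine ⟨fun i _ a b => ⟨flowG_nonneg s t hμ a b, flowG_le_capW s t hμ a b⟩,
    fun j _ a => sum_flowG_left_eq_sum_flowG_right s t I μ j a, ?_, ?_, ?_⟩
  · rw [← Finset.sum_filter]
    exact sum_flowG_right_of_subset_singleton s t μ hI0.subset
  · have hs : s ∈ I 0 := hI0 ▸ Finset.mem_singleton_self s
    exact sum_flowG_right_eq_zero_of_eq_true s t μ hs rfl
  · rintro j rfl
    have ht : t ∈ I (j + 1) := hIl ▸ Finset.mem_singleton_self t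
    exact sum_flowG_left_eq_zero_of_eq_false s t μ ht rfl
end

section
/- Let B_1, …, B_ℓ, μ_1, …, μ_ℓ and the sequential-sampling distribution A be as in the setup, with U = B_1 ∪ … ∪ B_ℓ, and let e be an element not in U. For an assignment g of a set X, its mirror is the assignment obtained by exchanging the values 0 and 1 at every point. Define bags B'_i = B_i ∪ {e} and distributions μ'_i on assignments B'_i → {0,1} by μ'_i(g) = μ_i(g|_{B_i})/2 if g(e) = 0 and μ'_i(g) = μ_i(mirror of g|_{B_i})/2 if g(e) = 1. Then: (a) each μ'_i is mirror-symmetric, i.e. μ'_i(g) = μ'_i(mirror of g) for all g; (b) the sequence B'_1, …, B'_ℓ with the μ'_i again satisfies the interval property, positivity, and consistency; and (c) the sequential-sampling distribution A' for B'_1, …, B'_ℓ and μ'_1, …, μ'_ℓ satisfies, for every assignment g : U → {0,1}, Pr_{f ∼ A'}[ f|_U = g ] = (1/2) Pr_{f ∼ A}[ f = g ] + (1/2) Pr_{f ∼ A}[ f = mirror of g ]. -/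
/-!
STATEMENT 15: Mirror-symmetrization of the sequential-sampling distribution.
-/

variable {V : Type*} [Fintype V] [DecidableEq V]

/-- Restriction of an assignment of `S'` to a subset `S ⊆ S'`. -/
def res {S S' : Finset V} (h : S ⊆ S') (f : ↥S' → Bool) : ↥S → Bool :=
  fun x => f ⟨x.1, h x.2⟩

/-- The mirror of an assignment: exchange the values `0` and `1` at every point. -/
def mir {S : Finset V} (g : ↥S → Bool) : ↥S → Bool := fun x => !(g x)

/-- The marginal on assignments of `S ⊆ S'` of a distribution `μ` on assignments
of `S'`. -/
noncomputable def marg {S S' : Finset V} (h : S ⊆ S') (μ : (↥S' → Bool) → ℝ) :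
    (↥S → Bool) → ℝ :=
  fun g => ∑ f : ↥S' → Bool, if res h f = g then μ f else 0

/-- The sequential-sampling distribution on assignments of `B 0 ∪ … ∪ B (ℓ-1)`:
sample `f|_{B 0}` from `μ 0`; then, for `i = 1, …, ℓ-1` in order, sample
`f|_{B i \ B (i-1)}` from the conditional distribution of `μ i` given that it agrees
with the already-determined values on `B i ∩ B (i-1)`. -/
noncomputable def seqDensity (ℓ : ℕ) (B : Fin ℓ → Finset V)
    (μ : ∀ i, (↥(B i) → Bool) → ℝ) :
    (↥(Finset.univ.biUnion B) → Bool) → ℝ := fun f =>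
  ∏ i : Fin ℓ,
    if (i : ℕ) = 0 then
      μ i (res (Finset.subset_biUnion_of_mem B (Finset.mem_univ i)) f)
    else
      μ i (res (Finset.subset_biUnion_of_mem B (Finset.mem_univ i)) f) /
        marg
          (show B i ∩ B ⟨(i : ℕ) - 1, lt_of_le_of_lt (Nat.sub_le _ _) i.isLt⟩ ⊆ B i from
            Finset.inter_subset_left)
          (μ i)
          (res
            (Finset.Subset.trans Finset.inter_subset_left
              (Finset.subset_biUnion_of_mem B (Finset.mem_univ i))) f)

/-- The symmetrized distributions `μ'_i` on assignments of `B_i ∪ {e}`: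
`μ'_i(g) = μ_i(g|_{B_i})/2` if `g(e) = 0`, and `μ'_i(g) = μ_i(mirror of g|_{B_i})/2`
if `g(e) = 1`. -/
noncomputable def mirSym (ℓ : ℕ) (e : V) (B : Fin ℓ → Finset V)
    (μ : ∀ i, (↥(B i) → Bool) → ℝ) :
    ∀ i : Fin ℓ, (↥(B i ∪ {e}) → Bool) → ℝ := fun i g =>
  if g ⟨e, Finset.mem_union_right _ (Finset.mem_singleton_self e)⟩ = false then
    μ i (res Finset.subset_union_left g) / 2
  else
    μ i (mir (res Finset.subset_union_left g)) / 2

/-!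
Reading an assignment `f` of `S ∪ {e}` relative to its value at `e` gives a bijection
`f ↦ (f e, f|_S mirrored if f e = 1)` onto pairs of a bit and an assignment of `S`. In these
coordinates the symmetrization of a weight `ν` is the product of a fair coin and `ν`, and
restriction to a subset containing `e` acts on the second coordinate only. Hence symmetrization
commutes with marginals, and the factors `1 / 2` cancel in every conditional probability of
sequential sampling: `A'` is the symmetrization of `A`. Forgetting the coin averages `A` over the
two mirror images.
-/

open Finset

section Mirror

variable {α : Type*} {S S' : Finset α} {e : α}

/-- The assignment `g` if the bit `b` is `0`, and its mirror if `b` is `1`; writing both cases as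
one exclusive or avoids case distinctions on `b`. -/
def mirIf (b : Bool) (g : ↥S → Bool) : ↥S → Bool := fun x => xor b (g x)

theorem mirIf_false (g : ↥S → Bool) : mirIf false g = g :=
  funext fun _ => Bool.false_xor _

theorem mirIf_true (g : ↥S → Bool) : mirIf true g = mir g :=
  funext fun _ => Bool.true_xor _

theorem mirIf_mirIf (b : Bool) (g : ↥S → Bool) : mirIf b (mirIf b g) = g :=
  funext fun x => by simp [mirIf]

theorem mirIf_eq_iff_eq_mirIf {b : Bool} {g h : ↥S → Bool} : mirIf b g = h ↔ g = mirIf b h :=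
  Function.Involutive.eq_iff (mirIf_mirIf b)

theorem mirIf_not_mir (b : Bool) (g : ↥S → Bool) : mirIf (!b) (mir g) = mirIf b g :=
  funext fun x => by simp [mirIf, mir]

/-- The mirror-symmetrization, to a set `S'` containing `S` and the reference point `e`, of a
weight `ν` on assignments of `S`: the value at `e` is a fair coin which decides whether the
restriction to `S` is weighted by `ν` directly or through its mirror. The case of interest is
`S' = S ∪ {e}`; a separate `S'` is allowed because the intersections and the union of the bags
`B i ∪ {e}` have this form only up to a propositional equality. -/
noncomputable def mirSymmetrize (he : e ∈ S') (hS : S ⊆ S') (ν : (↥S → Bool) → ℝ) :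
    (↥S' → Bool) → ℝ :=
  fun f => ν (mirIf (f ⟨e, he⟩) (res hS f)) / 2

theorem mirSymmetrize_mir (he : e ∈ S') (hS : S ⊆ S') (ν : (↥S → Bool) → ℝ) (f : ↥S' → Bool) :
    mirSymmetrize he hS ν (mir f) = mirSymmetrize he hS ν f :=
  congrArg (fun g => ν g / 2) (mirIf_not_mir (f ⟨e, he⟩) (res hS f))

theorem mirSymmetrize_pos (he : e ∈ S') (hS : S ⊆ S') {ν : (↥S → Bool) → ℝ}
    (hν : ∀ g, 0 < ν g) (f : ↥S' → Bool) : 0 < mirSymmetrize he hS ν f :=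
  half_pos (hν _)

end Mirror

section Marginal

variable {α : Type*} [DecidableEq α] {S S' T T' : Finset α} {e : α}

theorem mem_union_singleton_self (S : Finset α) (e : α) : e ∈ S ∪ {e} :=
  mem_union_right _ (mem_singleton_self e)

/-- The coordinates `(f e, f|_S mirrored if f e = 1)` of an assignment `f` of `S ∪ {e}`, in which
mirror-symmetrization is multiplication by a fair coin. -/
def mirSplit (he : e ∉ S) : (↥(S ∪ {e}) → Bool) ≃ Bool × (↥S → Bool) where
  toFun f := (f ⟨e, mem_union_singleton_self S e⟩,
    mirIf (f ⟨e, mem_union_singleton_self S e⟩) (res subset_union_left f))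
  invFun p x := if hx : x.1 ∈ S then mirIf p.1 p.2 ⟨x.1, hx⟩ else p.1
  left_inv f := by
    funext ⟨x, hx⟩
    by_cases hxS : x ∈ S
    · simp [hxS, mirIf_mirIf, res]
    · obtain rfl : x = e := by simpa [hxS] using hx
      simp [hxS]
  right_inv p := by
    ext x <;> simp [he, mirIf, res]

theorem res_mirSplit_symm (he : e ∉ S) (p : Bool × (↥S → Bool)) :
    res subset_union_left ((mirSplit he).symm p) = mirIf p.1 p.2 :=
  funext fun x => dif_pos x.2

theorem mirSplit_res (heS : e ∉ S) (heT : e ∉ T) (hT : T ⊆ S) (hT' : T ∪ {e} ⊆ S ∪ {e})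
    (f : ↥(S ∪ {e}) → Bool) :
    mirSplit heT (res hT' f) = ((mirSplit heS f).1, res hT (mirSplit heS f).2) :=
  rfl

theorem marg_mirSymmetrize_eq_sum (he : e ∉ S) (hT' : T' ⊆ S ∪ {e}) (ν : (↥S → Bool) → ℝ)
    (g : ↥T' → Bool) :
    marg hT' (mirSymmetrize (mem_union_singleton_self S e) subset_union_left ν) g =
      ∑ b : Bool, ∑ h : ↥S → Bool,
        if res hT' ((mirSplit he).symm (b, h)) = g then ν h / 2 else 0 := by
  rw [← Fintype.sum_prod_type', marg]
  refine Fintype.sum_equiv (mirSplit he) _ _ fun f => ?_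
  rw [Equiv.symm_apply_apply]
  rfl

theorem marg_mirSymmetrize (heS : e ∉ S) (hS' : S' = S ∪ {e}) (hT : T ⊆ S) (hTe : T' = T ∪ {e})
    (hT' : T' ⊆ S') (he' : e ∈ S') (hS : S ⊆ S') (he : e ∈ T') (hTT' : T ⊆ T')
    (ν : (↥S → Bool) → ℝ) :
    marg hT' (mirSymmetrize he' hS ν) = mirSymmetrize he hTT' (marg hT ν) := by
  subst hS' hTe
  have heT : e ∉ T := fun h => heS (hT h)
  funext g
  have res_eq_iff (b : Bool) (h : ↥S → Bool) : res hT' ((mirSplit heS).symm (b, h)) = g ↔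
      b = (mirSplit heT g).1 ∧ res hT h = (mirSplit heT g).2 := by
    rw [← (mirSplit heT).injective.eq_iff, mirSplit_res heS heT hT, Equiv.apply_symm_apply,
      Prod.ext_iff]
  calc marg hT' (mirSymmetrize he' hS ν) g
      = ∑ b : Bool, ∑ h : ↥S → Bool,
          if b = (mirSplit heT g).1 ∧ res hT h = (mirSplit heT g).2 then ν h / 2 else 0 := by
        simp only [marg_mirSymmetrize_eq_sum heS, res_eq_iff]
    _ = ∑ h : ↥S → Bool, if res hT h = (mirSplit heT g).2 then ν h / 2 else 0 := by
        rw [sum_comm]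
        simp [ite_and]
    _ = mirSymmetrize he hTT' (marg hT ν) g := by
        simp only [mirSymmetrize, marg, sum_div, ite_div, zero_div]
        rfl

theorem marg_mirSymmetrize_self (heS : e ∉ S) (hS' : S' = S ∪ {e}) (he : e ∈ S') (hS : S ⊆ S')
    (ν : (↥S → Bool) → ℝ) (g : ↥S → Bool) :
    marg hS (mirSymmetrize he hS ν) g = (1 / 2) * ν g + (1 / 2) * ν (mir g) := by
  subst hS'
  simp only [marg_mirSymmetrize_eq_sum heS, res_mirSplit_symm, mirIf_eq_iff_eq_mirIf,
    Fintype.sum_ite_eq', Fintype.sum_bool, mirIf_true, mirIf_false]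
  ring

end Marginal

section SequentialSampling

variable {α : Type*} [DecidableEq α] {ℓ : ℕ} {e : α}

theorem mirSym_eq_mirSymmetrize (B : Fin ℓ → Finset α) (μ : ∀ i, (↥(B i) → Bool) → ℝ)
    (i : Fin ℓ) :
    mirSym ℓ e B μ i =
      mirSymmetrize (mem_union_singleton_self (B i) e) subset_union_left (μ i) := by
  funext g
  unfold mirSym mirSymmetrize
  split_ifs with hge
  · rw [hge, mirIf_false]
  · rw [Bool.eq_true_of_not_eq_false hge, mirIf_true]

theorem biUnion_union_singleton {ι : Type*} {s : Finset ι} (hs : s.Nonempty) (B : ι → Finset α)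
    (e : α) : s.biUnion (fun i => B i ∪ {e}) = s.biUnion B ∪ {e} := by
  ext x
  simp [and_or_left, exists_or, hs.exists_mem]

theorem seqDensity_mirSym {n : ℕ} (B : Fin (n + 1) → Finset α) (μ : ∀ i, (↥(B i) → Bool) → ℝ)
    (heB : ∀ i, e ∉ B i) (he : e ∈ univ.biUnion fun i => B i ∪ {e})
    (hU : univ.biUnion B ⊆ univ.biUnion fun i => B i ∪ {e}) :
    seqDensity (n + 1) (fun i => B i ∪ {e}) (mirSym (n + 1) e B μ) =
      mirSymmetrize he hU (seqDensity (n + 1) B μ) := by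
  funext f
  simp only [mirSymmetrize, seqDensity, mirSym_eq_mirSymmetrize]
  rw [Fin.prod_univ_succ, Fin.prod_univ_succ, mul_div_right_comm]
  refine congrArg₂ (· * ·) rfl (prod_congr rfl fun i _ => ?_)
  rw [if_neg (Fin.val_ne_zero_iff.2 i.succ_ne_zero), if_neg (Fin.val_ne_zero_iff.2 i.succ_ne_zero),
    marg_mirSymmetrize (heB i.succ) rfl inter_subset_left
      (inter_union_distrib_right ..).symm _ _ _
      (mem_inter_of_mem (mem_union_singleton_self _ e) (mem_union_singleton_self _ e))
      (inter_subset_inter subset_union_left subset_union_left)]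
  exact div_div_div_cancel_right₀ two_ne_zero _ _

theorem marg_mirSym_eq_marg_mirSym {B : Fin ℓ → Finset α} {μ : ∀ i, (↥(B i) → Bool) → ℝ}
    {i j : Fin ℓ} (hei : e ∉ B i) (hej : e ∉ B j)
    (hcons : marg (inter_subset_left : B i ∩ B j ⊆ B i) (μ i) =
      marg (inter_subset_right : B i ∩ B j ⊆ B j) (μ j)) :
    marg (inter_subset_left : (B i ∪ {e}) ∩ (B j ∪ {e}) ⊆ B i ∪ {e}) (mirSym ℓ e B μ i) =
      marg (inter_subset_right : (B i ∪ {e}) ∩ (B j ∪ {e}) ⊆ B j ∪ {e}) (mirSym ℓ e B μ j) := by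
  have hbags : (B i ∪ {e}) ∩ (B j ∪ {e}) = B i ∩ B j ∪ {e} :=
    (inter_union_distrib_right ..).symm
  have he : e ∈ (B i ∪ {e}) ∩ (B j ∪ {e}) := hbags ▸ mem_union_singleton_self _ e
  have hsub : B i ∩ B j ⊆ (B i ∪ {e}) ∩ (B j ∪ {e}) := hbags ▸ subset_union_left
  rw [mirSym_eq_mirSymmetrize, mirSym_eq_mirSymmetrize,
    marg_mirSymmetrize hei rfl inter_subset_left hbags _ _ _ he hsub,
    marg_mirSymmetrize hej rfl inter_subset_right hbags _ _ _ he hsub, hcons]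

theorem marg_seqDensity_mirSym (hℓ : 1 ≤ ℓ) (B : Fin ℓ → Finset α)
    (μ : ∀ i, (↥(B i) → Bool) → ℝ) (he : e ∉ univ.biUnion B)
    (hU : univ.biUnion B ⊆ univ.biUnion fun i => B i ∪ {e}) (g : ↥(univ.biUnion B) → Bool) :
    marg hU (seqDensity ℓ (fun i => B i ∪ {e}) (mirSym ℓ e B μ)) g =
      (1 / 2) * seqDensity ℓ B μ g + (1 / 2) * seqDensity ℓ B μ (mir g) := by
  obtain ⟨n, rfl⟩ := Nat.exists_eq_add_of_le' hℓ
  have heB (i : Fin (n + 1)) : e ∉ B i := fun h => he (mem_biUnion.2 ⟨i, mem_univ i, h⟩)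
  have hbags : univ.biUnion (fun i => B i ∪ {e}) = univ.biUnion B ∪ {e} :=
    biUnion_union_singleton univ_nonempty B e
  have he' : e ∈ univ.biUnion fun i => B i ∪ {e} := hbags ▸ mem_union_singleton_self _ e
  rw [seqDensity_mirSym B μ heB he' hU, marg_mirSymmetrize_self he hbags]

theorem stmt15_general (hℓ : 1 ≤ ℓ) (B : Fin ℓ → Finset α)
    (hint : ∀ i k j : Fin ℓ, i ≤ k → k ≤ j → B i ∩ B j ⊆ B k)
    (μ : ∀ i, (↥(B i) → Bool) → ℝ) (hpos : ∀ i g, 0 < μ i g)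
    (hcons : ∀ i j : Fin ℓ, marg (inter_subset_left : B i ∩ B j ⊆ B i) (μ i) =
      marg (inter_subset_right : B i ∩ B j ⊆ B j) (μ j))
    (he : e ∉ univ.biUnion B)
    (hU : univ.biUnion B ⊆ univ.biUnion fun i => B i ∪ {e}) :
    (∀ (i : Fin ℓ) (g : ↥(B i ∪ {e}) → Bool), mirSym ℓ e B μ i g = mirSym ℓ e B μ i (mir g)) ∧
    (∀ i k j : Fin ℓ, i ≤ k → k ≤ j → (B i ∪ {e}) ∩ (B j ∪ {e}) ⊆ B k ∪ {e}) ∧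
    (∀ (i : Fin ℓ) (g : ↥(B i ∪ {e}) → Bool), 0 < mirSym ℓ e B μ i g) ∧
    (∀ i j : Fin ℓ,
      marg (inter_subset_left : (B i ∪ {e}) ∩ (B j ∪ {e}) ⊆ B i ∪ {e}) (mirSym ℓ e B μ i) =
        marg (inter_subset_right : (B i ∪ {e}) ∩ (B j ∪ {e}) ⊆ B j ∪ {e}) (mirSym ℓ e B μ j)) ∧
    (∀ g : ↥(univ.biUnion B) → Bool,
      marg hU (seqDensity ℓ (fun i => B i ∪ {e}) (mirSym ℓ e B μ)) g =
        (1 / 2) * seqDensity ℓ B μ g + (1 / 2) * seqDensity ℓ B μ (mir g)) := by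
  have heB (i : Fin ℓ) : e ∉ B i := fun h => he (mem_biUnion.2 ⟨i, mem_univ i, h⟩)
  refine ⟨fun i g => ?mirrorSymmetric, fun i k j hik hkj => ?interval, fun i g => ?positive,
    fun i j => marg_mirSym_eq_marg_mirSym (heB i) (heB j) (hcons i j),
    marg_seqDensity_mirSym hℓ B μ he hU⟩
  case mirrorSymmetric =>
    rw [mirSym_eq_mirSymmetrize, mirSymmetrize_mir]
  case interval =>
    rw [← inter_union_distrib_right]
    exact union_subset_union_left (hint i k j hik hkj)
  case positive =>
    rw [mirSym_eq_mirSymmetrize]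
    exact mirSymmetrize_pos _ _ (hpos i) g

end SequentialSampling

theorem stmt15 (ℓ : ℕ) (hℓ : 1 ≤ ℓ) (B : Fin ℓ → Finset V)
    -- the bags are nonempty
    (hne : ∀ i, (B i).Nonempty)
    -- the interval property
    (hint : ∀ i k j : Fin ℓ, i ≤ k → k ≤ j → B i ∩ B j ⊆ B k)
    (μ : ∀ i, (↥(B i) → Bool) → ℝ)
    -- each μ i is a probability distribution assigning positive probability
    -- to every assignment
    (hpos : ∀ i g, 0 < μ i g)
    (hprob : ∀ i, ∑ g : ↥(B i) → Bool, μ i g = 1)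
    -- consistency: the marginals of μ i and μ j on B i ∩ B j coincide
    (hcons : ∀ i j : Fin ℓ,
      marg (Finset.inter_subset_left : B i ∩ B j ⊆ B i) (μ i) =
      marg (Finset.inter_subset_right : B i ∩ B j ⊆ B j) (μ j))
    -- `e` is a new element, not in `U`
    (e : V) (he : e ∉ Finset.univ.biUnion B)
    -- U ⊆ U'
    (hsub : Finset.univ.biUnion B ⊆ Finset.univ.biUnion (fun i => B i ∪ {e})) :
    -- (a) each μ' i is mirror-symmetric
    (∀ (i : Fin ℓ) (g : ↥(B i ∪ {e}) → Bool), mirSym ℓ e B μ i g = mirSym ℓ e B μ i (mir g))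
    -- (b) the shifted sequence again satisfies the interval property, positivity,
    -- and consistency
    ∧ (∀ i k j : Fin ℓ, i ≤ k → k ≤ j → (B i ∪ {e}) ∩ (B j ∪ {e}) ⊆ B k ∪ {e})
    ∧ (∀ (i : Fin ℓ) (g : ↥(B i ∪ {e}) → Bool), 0 < mirSym ℓ e B μ i g)
    ∧ (∀ i j : Fin ℓ,
        marg (Finset.inter_subset_left : (B i ∪ {e}) ∩ (B j ∪ {e}) ⊆ B i ∪ {e})
          (mirSym ℓ e B μ i) =
        marg (Finset.inter_subset_right : (B i ∪ {e}) ∩ (B j ∪ {e}) ⊆ B j ∪ {e})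
          (mirSym ℓ e B μ j))
    -- (c) the sequential-sampling distribution A' for the new sequence satisfies
    -- Pr_{f ∼ A'}[ f|_U = g ] = (1/2) Pr_{f ∼ A}[ f = g ] + (1/2) Pr_{f ∼ A}[ f = mirror g ]
    ∧ (∀ g : ↥(Finset.univ.biUnion B) → Bool,
        marg hsub (seqDensity ℓ (fun i => B i ∪ {e}) (mirSym ℓ e B μ)) g
          = (1 / 2) * seqDensity ℓ B μ g + (1 / 2) * seqDensity ℓ B μ (mir g)) :=
  stmt15_general hℓ B hint μ hpos hcons he hsub
end

section
/- Let T be the path on nodes 1, 2, …, 7 (in this order) with bags over the vertex set {a, b, c, d, e, f, g} given by B_1 = {a,b}, B_2 = {a,b,c}, B_3 = {a,c,d}, B_4 = {a,d,e}, B_5 = {a,e,f}, B_6 = {a,f,g}, B_7 = {a}. Then: (a) (T, B) is a tree decomposition of the graph on {a,…,g} whose edges are exactly the pairs of distinct vertices contained in a common bag; (b) the combinatorial length of T_{1↔7} is at most 1, and the combinatorial length of T_{7↔6} is at most 1; (c) the path T_{1↔6} contains no redundant internal node, so its only simplification is itself and its combinatorial length is exactly 5; consequently the combinatorial length of T_{1↔6}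 strictly exceeds the sum of the combinatorial lengths of T_{1↔7} and T_{7↔6}, i.e. combinatorial length does not satisfy the triangle inequality. -/
/-!
STATEMENT 16: The concrete example on the path with bags
B_1 = {a,b}, B_2 = {a,b,c}, B_3 = {a,c,d}, B_4 = {a,d,e}, B_5 = {a,e,f},
B_6 = {a,f,g}, B_7 = {a}, showing that combinatorial length does not satisfy the
triangle inequality.  Here nodes 1,…,7 are `0,…,6 : Fin 7` and vertices a,…,g are
`0,…,6 : Fin 7`.
-/

open SimpleGraph

/-- `(T, B)` is a tree decomposition of the graph `G`. -/
structure IsTreeDecomp {V ι : Type*} (G : SimpleGraph V) (T : SimpleGraph ι)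
    (B : ι → Set V) : Prop where
  isTree : T.IsTree
  exists_bag : ∀ v : V, ∃ i, v ∈ B i
  edge_bag : ∀ ⦃u v : V⦄, G.Adj u v → ∃ i, u ∈ B i ∧ v ∈ B i
  bag_connected : ∀ (v : V) (i j : ι), v ∈ B i → v ∈ B j →
    ∀ p : T.Walk i j, p.IsPath → ∀ k ∈ p.support, v ∈ B k

/-- One simplification step: delete a redundant internal node `x` (with neighbors
`u` and `w`, in some labeling of the two neighbors, satisfying `B x ∩ B w ⊆ B u`)
from the list of nodes of a path, joining its two former neighbors. -/
def SimpStep {V ι : Type*} (B : ι → Set V) (l l' : List ι) : Prop :=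
  ∃ (l₁ l₂ : List ι) (u x w : ι),
    l = l₁ ++ u :: x :: w :: l₂ ∧ l' = l₁ ++ u :: w :: l₂ ∧
      (B x ∩ B w ⊆ B u ∨ B x ∩ B u ⊆ B w)

/-- The path `T_{s↔t}` has combinatorial length at most `n`: some simplification of
the (unique) path from `s` to `t` has at most `n` edges (i.e. at most `n + 1` nodes). -/
def CombLenLE {V ι : Type*} (T : SimpleGraph ι) (B : ι → Set V) (s t : ι) (n : ℕ) : Prop :=
  ∀ p : T.Walk s t, p.IsPath →
    ∃ l : List ι, Relation.ReflTransGen (SimpStep B) p.support l ∧ l.length ≤ n + 1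

/-- The bags of the example: `B_1 = {a,b}, B_2 = {a,b,c}, B_3 = {a,c,d},
B_4 = {a,d,e}, B_5 = {a,e,f}, B_6 = {a,f,g}, B_7 = {a}`. -/
def B16 : Fin 7 → Set (Fin 7) :=
  ![{0, 1}, {0, 1, 2}, {0, 2, 3}, {0, 3, 4}, {0, 4, 5}, {0, 5, 6}, {0}]

/-- The graph on `{a,…,g}` whose edges are exactly the pairs of distinct vertices
contained in a common bag. -/
def G16 : SimpleGraph (Fin 7) :=
  SimpleGraph.fromRel (fun u v => ∃ i, u ∈ B16 i ∧ v ∈ B16 i)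

/-- The path on the nodes `1, …, 7`. -/
def T16 : SimpleGraph (Fin 7) := SimpleGraph.pathGraph 7

/-!
The bag `B_7 = {a}` lies in every other bag. Walking a path towards such a minimal bag, each
internal node shares with the end only what its predecessor also contains, so all internal nodes
can be deleted, starting next to the end. On the path `T_{1↔6}`, in contrast, every two consecutive
bags share a vertex found in no other bag, so no internal node is redundant. Hence the detour
through node 7 is short while the direct path cannot be shortened.
-/

section Hasse

variable {α : Type*} [LinearOrder α] {a b c : α}

theorem mem_support_hasse_of_mem_Icc (p : (hasse α).Walk a b) (hc : c ∈ Set.Icc a b) :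
    c ∈ p.support := by
  obtain ⟨hac, hcb⟩ := hc
  induction p with
  | nil => simp [le_antisymm hcb hac]
  | cons hadj q ih =>
    rw [Walk.support_cons, List.mem_cons]
    obtain rfl | hlt := hac.eq_or_lt
    · exact .inl rfl
    · refine .inr (ih ?_ hcb)
      obtain hcov | hcov := hadj
      · exact hcov.ge_of_gt hlt
      · exact hcov.le.trans hac

theorem isChain_covBy_support_hasse {p : (hasse α).Walk a b} (hp : p.IsPath) (hab : a ≤ b) :
    p.support.IsChain (· ⋖ ·) := by
  induction p with
  | nil => simp
  | @cons a d b hadj q ih =>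
    obtain ⟨hq, ha⟩ := (Walk.cons_isPath_iff hadj q).mp hp
    have hlt : a < b := hab.lt_of_ne fun h => ha (h ▸ q.end_mem_support)
    -- A first step downwards would force the rest of the path to climb back through `a`.
    have hcov : a ⋖ d :=
      hadj.resolve_right fun h => ha (mem_support_hasse_of_mem_Icc q ⟨h.le, hab⟩)
    have hchain := ih hq (hcov.ge_of_gt hlt)
    rw [Walk.support_cons]
    rw [← Walk.cons_tail_support] at hchain ⊢
    exact .cons_cons hcov hchain

theorem sortedLT_support_hasse {p : (hasse α).Walk a b} (hp : p.IsPath) (hab : a ≤ b) :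
    p.support.SortedLT :=
  ((isChain_covBy_support_hasse hp hab).imp fun _ _ h => h.lt).sortedLT

theorem mem_support_hasse_iff_mem_Icc {p : (hasse α).Walk a b} (hp : p.IsPath) (hab : a ≤ b) :
    c ∈ p.support ↔ c ∈ Set.Icc a b := by
  refine ⟨fun hc => ⟨?_, ?_⟩, mem_support_hasse_of_mem_Icc p⟩
  · have hsorted := (sortedLT_support_hasse hp hab).pairwise
    rw [← Walk.cons_tail_support, List.mem_cons] at hc
    rw [← Walk.cons_tail_support, List.pairwise_cons] at hsorted
    obtain rfl | hc := hc
    · exact le_rfl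
    · exact (hsorted.1 c hc).le
  · by_contra! hbc
    exact Walk.endpoint_notMem_support_takeUntil hp hc hbc.ne
      (mem_support_hasse_of_mem_Icc _ ⟨hab, hbc.le⟩)

theorem mem_support_hasse_iff_mem_uIcc {p : (hasse α).Walk a b} (hp : p.IsPath) :
    c ∈ p.support ↔ c ∈ Set.uIcc a b := by
  obtain hab | hba := le_total a b
  · rw [Set.uIcc_of_le hab, mem_support_hasse_iff_mem_Icc hp hab]
  · rw [Set.uIcc_of_ge hba, ← mem_support_hasse_iff_mem_Icc hp.reverse hba, Walk.support_reverse,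
      List.mem_reverse]

theorem support_hasse_eq_of_sortedLT {p : (hasse α).Walk a b} (hp : p.IsPath) (hab : a ≤ b)
    {l : List α} (hl : l.SortedLT) (hmem : ∀ c, c ∈ l ↔ c ∈ Set.Icc a b) : p.support = l :=
  (sortedLT_support_hasse hp hab).eq_of_mem_iff hl fun c => by
    rw [hmem, mem_support_hasse_iff_mem_Icc hp hab]

theorem isAcyclic_hasse : (hasse α).IsAcyclic := by
  have unique_of_le {a b : α} {p q : (hasse α).Walk a b} (hp : p.IsPath) (hq : q.IsPath)
      (hab : a ≤ b) : p = q :=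
    Walk.ext_support <| support_hasse_eq_of_sortedLT hp hab (sortedLT_support_hasse hq hab)
      fun _ => mem_support_hasse_iff_mem_Icc hq hab
  refine isAcyclic_iff_subsingleton_path.mpr fun a b => ⟨fun ⟨p, hp⟩ ⟨q, hq⟩ => Subtype.ext ?_⟩
  obtain hab | hba := le_total a b
  · exact unique_of_le hp hq hab
  · exact Walk.reverse_injective (unique_of_le hp.reverse hq.reverse hba)

theorem isTreeDecomp_hasse {V : Type*} {G : SimpleGraph V} {B : α → Set V}
    (hconn : (hasse α).Connected) (hcover : ∀ v, ∃ i, v ∈ B i)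
    (hedge : ∀ ⦃u v⦄, G.Adj u v → ∃ i, u ∈ B i ∧ v ∈ B i)
    (hord : ∀ v, {i | v ∈ B i}.OrdConnected) : IsTreeDecomp G (hasse α) B where
  isTree := ⟨hconn, isAcyclic_hasse⟩
  exists_bag := hcover
  edge_bag := hedge
  bag_connected v _ _ hi hj _ hp _ hk :=
    (hord v).uIcc_subset hi hj ((mem_support_hasse_iff_mem_uIcc hp).mp hk)

end Hasse

section Simplification

variable {V ι : Type*} {B : ι → Set V} {l l' : List ι} {u x w s t : ι}

/-- A node `x` of a path, with neighbors `u` and `w` on it, is redundant with respect to the bags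
`B`; the two disjuncts are the two labelings of the neighbors. -/
def IsRedundant (B : ι → Set V) (u x w : ι) : Prop :=
  B x ∩ B w ⊆ B u ∨ B x ∩ B u ⊆ B w

theorem SimpStep.cons (h : SimpStep B l l') (a : ι) : SimpStep B (a :: l) (a :: l') := by
  obtain ⟨l₁, l₂, u, x, w, rfl, rfl, hred⟩ := h
  exact ⟨a :: l₁, l₂, u, x, w, rfl, rfl, hred⟩

theorem SimpStep.reverse (h : SimpStep B l l') : SimpStep B l.reverse l'.reverse := by
  obtain ⟨l₁, l₂, u, x, w, rfl, rfl, hred⟩ := h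
  exact ⟨l₂.reverse, l₁.reverse, w, x, u, by simp, by simp, hred.symm⟩

theorem not_simpStep_of_length_le_two (hl : l.length ≤ 2) : ¬ SimpStep B l l' := by
  rintro ⟨l₁, l₂, u, x, w, rfl, -, -⟩
  simp only [List.length_append, List.length_cons] at hl
  omega

theorem exists_simpStep_cons_cons_cons_iff :
    (∃ l', SimpStep B (u :: x :: w :: l) l') ↔
      IsRedundant B u x w ∨ ∃ l', SimpStep B (x :: w :: l) l' := by
  constructor
  · rintro ⟨_, _ | ⟨a, l₁⟩, l₂, u', x', w', hl, -, hred⟩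
    · obtain ⟨rfl, rfl, rfl, rfl⟩ : u = u' ∧ x = x' ∧ w = w' ∧ l = l₂ := by simpa using hl
      exact .inl hred
    · exact .inr ⟨_, l₁, l₂, u', x', w', (List.cons.inj hl).2, rfl, hred⟩
  · rintro (hred | ⟨l', h⟩)
    · exact ⟨_, [], l, u, x, w, rfl, rfl, hred⟩
    · exact ⟨_, h.cons u⟩

theorem reflTransGen_simpStep_pair (h : ∀ x ∈ s :: l, B t ⊆ B x) :
    Relation.ReflTransGen (SimpStep B) (s :: (l ++ [t])) [s, t] := by
  induction l generalizing s with
  | nil => exact .refl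
  | cons x l ih =>
    obtain ⟨hs, hl⟩ := List.forall_mem_cons.mp h
    have hreduce : Relation.ReflTransGen (SimpStep B) (s :: x :: (l ++ [t])) [s, x, t] :=
      (ih hl).lift (s :: ·) fun _ _ hstep => hstep.cons s
    exact hreduce.tail ⟨[], [], s, x, t, rfl, rfl, .inl (Set.inter_subset_right.trans hs)⟩

variable {T : SimpleGraph ι} {n : ℕ}

theorem CombLenLE.symm (h : CombLenLE T B s t n) : CombLenLE T B t s n := by
  intro p hp
  obtain ⟨l, hl, hlen⟩ := h p.reverse hp.reverse
  have hrev : Relation.ReflTransGen (SimpStep B) p.reverse.support.reverse l.reverse :=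
    hl.lift List.reverse fun _ _ hstep => hstep.reverse
  rw [Walk.support_reverse, List.reverse_reverse] at hrev
  exact ⟨l.reverse, hrev, by rwa [List.length_reverse]⟩

theorem combLenLE_one_of_forall_subset (h : ∀ i, B t ⊆ B i) : CombLenLE T B s t 1 := by
  rintro (_ | ⟨hadj, q⟩) -
  · exact ⟨[s], .refl, by simp⟩
  · refine ⟨[s, t], ?_, by simp⟩
    rw [Walk.support_cons, ← Walk.dropLast_support_concat]
    exact reflTransGen_simpStep_pair fun x _ => h x

theorem combLenLE_iff_of_not_exists_simpStep (hT : T.IsAcyclic) {p : T.Walk s t} (hp : p.IsPath)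
    (hirr : ¬ ∃ l, SimpStep B p.support l) : CombLenLE T B s t n ↔ p.length ≤ n := by
  have hself (l : List ι) : Relation.ReflTransGen (SimpStep B) p.support l ↔ l = p.support :=
    Relation.reflTransGen_iff_eq (not_exists.mp hirr)
  have hunique (q : T.Walk s t) (hq : q.IsPath) : q = p :=
    congrArg Subtype.val ((hT.subsingleton_path s t).elim ⟨q, hq⟩ ⟨p, hp⟩)
  constructor
  · intro h
    obtain ⟨l, hl, hlen⟩ := h p hp
    rw [(hself l).mp hl, Walk.length_support] at hlen
    omega
  · intro hn q hq
    rw [hunique q hq]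
    exact ⟨_, .refl, by rw [Walk.length_support]; omega⟩

end Simplification

theorem mem_B16_iff {v i : Fin 7} :
    v ∈ B16 i ↔ v = 0 ∨ i.val < 6 ∧ (v.val = i.val ∨ v.val = i.val + 1) := by
  fin_cases i <;> fin_cases v <;> simp [B16]

theorem B16_six_subset (i : Fin 7) : B16 6 ⊆ B16 i := by
  intro v hv
  rw [mem_B16_iff] at hv ⊢
  exact .inl (hv.resolve_right fun h => absurd h.1 (by decide))

theorem ordConnected_setOf_mem_B16 (v : Fin 7) : {i | v ∈ B16 i}.OrdConnected := by
  refine ⟨fun i hi j hj k ⟨hik, hkj⟩ => ?_⟩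
  simp only [Set.mem_ofPred_eq, mem_B16_iff] at hi hj ⊢
  omega

theorem isTreeDecomp_B16 : IsTreeDecomp G16 T16 B16 := by
  refine isTreeDecomp_hasse (pathGraph_connected 6) (fun v => ?_) (fun u v huv => ?_)
    ordConnected_setOf_mem_B16
  · obtain rfl | hv := eq_or_ne v 6
    · exact ⟨5, mem_B16_iff.mpr (by decide)⟩
    · exact ⟨v, mem_B16_iff.mpr (by omega)⟩
  · obtain ⟨-, ⟨i, hu, hv⟩ | ⟨i, hv, hu⟩⟩ := (fromRel_adj _ u v).mp huv
    · exact ⟨i, hu, hv⟩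
    · exact ⟨i, hu, hv⟩

theorem not_isRedundant_B16 {u x w : Fin 7} (hux : u.val + 1 = x.val) (hxw : x.val + 1 = w.val)
    (hw : w.val < 6) : ¬ IsRedundant B16 u x w := by
  -- The vertex with index `x` is shared by `u` and `x` only, the one with index `w` by `x` and `w`.
  rintro (hsub | hsub)
  · have hmem : w ∈ B16 u := hsub ⟨mem_B16_iff.mpr (by omega), mem_B16_iff.mpr (by omega)⟩
    rw [mem_B16_iff] at hmem
    omega
  · have hmem : x ∈ B16 w := hsub ⟨mem_B16_iff.mpr (by omega), mem_B16_iff.mpr (by omega)⟩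
    rw [mem_B16_iff] at hmem
    omega

theorem not_exists_simpStep_B16 : ¬ ∃ l, SimpStep B16 [0, 1, 2, 3, 4, 5] l := by
  simp [exists_simpStep_cons_cons_cons_iff, not_isRedundant_B16, not_simpStep_of_length_le_two]

theorem support_T16_zero_five {p : T16.Walk 0 5} (hp : p.IsPath) :
    p.support = [0, 1, 2, 3, 4, 5] :=
  support_hasse_eq_of_sortedLT hp (by decide) (by decide) (by decide)

theorem combLenLE_T16_zero_five_iff {n : ℕ} : CombLenLE T16 B16 0 5 n ↔ 5 ≤ n := by
  obtain ⟨p, hp⟩ := isTreeDecomp_B16.isTree.connected.preconnected.exists_isPath 0 5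
  have hsupport := support_T16_zero_five hp
  have hlength : p.length = 5 := by simpa [hsupport] using p.length_support.symm
  rw [← hlength]
  exact combLenLE_iff_of_not_exists_simpStep isTreeDecomp_B16.isTree.isAcyclic hp
    (hsupport ▸ not_exists_simpStep_B16)

theorem stmt16 :
    -- (a) `(T16, B16)` is a tree decomposition of `G16`
    IsTreeDecomp G16 T16 B16
    -- (b) the combinatorial lengths of T_{1↔7} and of T_{7↔6} are at most 1
    ∧ CombLenLE T16 B16 0 6 1 ∧ CombLenLE T16 B16 6 5 1
    -- (c) the path T_{1↔6} contains no redundant internal node,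
    ∧ (¬ ∃ l : List (Fin 7), SimpStep B16 [0, 1, 2, 3, 4, 5] l)
    -- its only simplification is itself,
    ∧ (∀ l : List (Fin 7),
        Relation.ReflTransGen (SimpStep B16) [0, 1, 2, 3, 4, 5] l → l = [0, 1, 2, 3, 4, 5])
    -- its combinatorial length is exactly 5,
    ∧ CombLenLE T16 B16 0 5 5 ∧ (∀ n : ℕ, CombLenLE T16 B16 0 5 n → 5 ≤ n)
    -- and consequently it strictly exceeds the sum 1 + 1 of the combinatorial
    -- lengths of T_{1↔7} and T_{7↔6}: the triangle inequality fails
    ∧ ¬ CombLenLE T16 B16 0 5 (1 + 1) := by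
  have hto : CombLenLE T16 B16 0 6 1 := combLenLE_one_of_forall_subset B16_six_subset
  have hfrom : CombLenLE T16 B16 6 5 1 := (combLenLE_one_of_forall_subset B16_six_subset).symm
  have hself (l : List (Fin 7)) :
      Relation.ReflTransGen (SimpStep B16) [0, 1, 2, 3, 4, 5] l → l = [0, 1, 2, 3, 4, 5] :=
    (Relation.reflTransGen_iff_eq (not_exists.mp not_exists_simpStep_B16)).mp
  exact ⟨isTreeDecomp_B16, hto, hfrom, not_exists_simpStep_B16, hself,
    combLenLE_T16_zero_five_iff.mpr le_rfl, fun _ => combLenLE_T16_zero_five_iff.mp,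
    fun h => absurd (combLenLE_T16_zero_five_iff.mp h) (by decide)⟩
end
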